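/- Let α > 1 with α ∉ ℚ ∪ ℚ₂ and let h₀ ≥ 1 be an integer. Define D₀ = [−⌈h₀^α⌉, ⌈h₀^α⌉] × [0, h₀], U_{h₀} = {x ∈ ℍ : |x₁| ≥ ⌈h₀^α⌉, x₂ ≤ |x₁|^{1/α}}, Ŵ = D₀ ∪ U_{h₀}, and ξ₀ = (0, h₀) ∈ Ŵ. Then there exists a constant c > 0, independent of N, such that for all sufficiently large N, H_{Ŵ, N}(ξ₀) ≥ c. -/

import Mathlib

open Filter

namespace SHM

/-- The upper half planar lattice `ℍ = {(x₁,x₂) ∈ ℤ² : x₂ ≥ 0}` (including the x-axis). -/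
def upperH : Set (ℤ × ℤ) := {p | 0 ≤ p.2}

/-- The horizontal line `L_n = {(x,n) : x ∈ ℤ}` of height `n`. -/
def lineH (n : ℤ) : Set (ℤ × ℤ) := {p | p.2 = n}

/-- The four unit steps of the planar simple random walk. -/
def dirs : Finset (ℤ × ℤ) := {(1,0), (-1,0), (0,1), (0,-1)}

/-- The position after `m` steps of the walk started at `z` whose first `n`
increments are given by `σ`. -/
def pos (z : ℤ × ℤ) {n : ℕ} (σ : Fin n → ℤ × ℤ) (m : ℕ) : ℤ × ℤ :=
  z + ∑ i ∈ Finset.univ.filter (fun i : Fin n => (i : ℕ) < m), σ i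

/-- The probability that the first `n` increments of the simple random walk
(each uniform on the four unit vectors) satisfy the predicate `E`. -/
noncomputable def stepProb (n : ℕ) (E : (Fin n → ℤ × ℤ) → Prop) : ℝ :=
  (Nat.card {σ : Fin n → ↥dirs // E fun i => ((σ i : ℤ × ℤ))} : ℝ) / 4 ^ n

/-- `P_z(S_{τ̄_A} = x)` : the walk started at `z` hits `A` (in finite time) for the
first time precisely at the point `x`.  Here `τ̄_A = min {m ≥ 0 : S_m ∈ A}`. -/
noncomputable def hitProb (z : ℤ × ℤ) (A : Set (ℤ × ℤ)) (x : ℤ × ℤ) : ℝ :=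
  ∑' n : ℕ, stepProb n fun σ =>
    pos z σ n = x ∧ x ∈ A ∧ ∀ m < n, pos z σ m ∉ A

/-- `P_z(τ̄_A < τ̄_B)` : the walk started at `z` hits `A` strictly before hitting `B`. -/
noncomputable def hitBeforeProb (z : ℤ × ℤ) (A B : Set (ℤ × ℤ)) : ℝ :=
  ∑' n : ℕ, stepProb n fun σ =>
    pos z σ n ∈ A ∧ pos z σ n ∉ B ∧ ∀ m < n, pos z σ m ∉ A ∧ pos z σ m ∉ B

/-- The stationary harmonic measure `H_{B,N}(x) = Σ_{z ∈ L_N \ B} P_z(S_{τ̄_{B ∪ L₀}} = x)`. -/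
noncomputable def harm (B : Set (ℤ × ℤ)) (N : ℕ) (x : ℤ × ℤ) : ℝ :=
  ∑' z : ↥(lineH (N : ℤ) \ B), hitProb (z : ℤ × ℤ) (B ∪ lineH 0) x

/-- `ℚ₁ = {log n₁ / log n₂ : n₁, n₂ ∈ ℤ, n₁, n₂ ≥ 2}`. -/
def Q1 : Set ℝ := {r | ∃ n₁ n₂ : ℤ, 2 ≤ n₁ ∧ 2 ≤ n₂ ∧ r = Real.log n₁ / Real.log n₂}

/-- `ℚ₂ = {(b − dx)/(cx − a) ∈ ℝ : x ∈ ℚ₁, a, b, c, d ∈ ℤ}`. -/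
def Q2 : Set ℝ :=
  {r | ∃ x ∈ Q1, ∃ a b c d : ℤ, (c : ℝ) * x - a ≠ 0 ∧ r = ((b : ℝ) - d * x) / ((c : ℝ) * x - a)}

/-- The box `D₀ = [−⌈h₀^α⌉, ⌈h₀^α⌉] × [0, h₀]`. -/
def boxD₀ (α : ℝ) (h₀ : ℤ) : Set (ℤ × ℤ) :=
  {x | |x.1| ≤ ⌈(h₀ : ℝ) ^ α⌉ ∧ 0 ≤ x.2 ∧ x.2 ≤ h₀}

/-- The region `U_{h₀} = {x ∈ ℍ : |x₁| ≥ ⌈h₀^α⌉, x₂ ≤ |x₁|^{1/α}}`. -/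
def regionU (α : ℝ) (h₀ : ℤ) : Set (ℤ × ℤ) :=
  {x ∈ upperH | ⌈(h₀ : ℝ) ^ α⌉ ≤ |x.1| ∧ (x.2 : ℝ) ≤ |(x.1 : ℝ)| ^ (1 / α)}

/-- Recursive form of the first-hitting probabilities at time `n`. -/
noncomputable def hh (A : Set (ℤ × ℤ)) (x : ℤ × ℤ) : ℕ → ℤ × ℤ → ℝ
  | 0, z => by classical exact if z = x ∧ x ∈ A then 1 else 0
  | n + 1, z => by classical exact if z ∈ A then 0 else
      (hh A x n (z + (1,0)) + hh A x n (z + (-1,0)) + hh A x n (z + (0,1))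
        + hh A x n (z + (0,-1))) / 4

lemma hh_zero (A : Set (ℤ × ℤ)) (x z : ℤ × ℤ) (h : ¬ (z = x ∧ x ∈ A)) : hh A x 0 z = 0 := by
  simp only [hh]; rw [if_neg h]

lemma hh_zero_self (A : Set (ℤ × ℤ)) (x : ℤ × ℤ) (h : x ∈ A) : hh A x 0 x = 1 := by
  simp only [hh]; rw [if_pos ⟨rfl, h⟩]

lemma hh_succ_mem (A : Set (ℤ × ℤ)) (x z : ℤ × ℤ) (n : ℕ) (h : z ∈ A) :
    hh A x (n+1) z = 0 := by
  simp only [hh]; rw [if_pos h]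

lemma hh_succ (A : Set (ℤ × ℤ)) (x z : ℤ × ℤ) (n : ℕ) (h : z ∉ A) :
    hh A x (n+1) z = (hh A x n (z + (1,0)) + hh A x n (z + (-1,0)) + hh A x n (z + (0,1))
        + hh A x n (z + (0,-1))) / 4 := by
  simp only [hh]; rw [if_neg h]

lemma hh_nonneg (A : Set (ℤ × ℤ)) (x : ℤ × ℤ) (n : ℕ) : ∀ z, 0 ≤ hh A x n z := by
  induction n with
  | zero => intro z; simp only [hh]; split_ifs <;> norm_num
  | succ n ih =>
    intro z
    by_cases h : z ∈ A
    · rw [hh_succ_mem _ _ _ _ h]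
    · rw [hh_succ _ _ _ _ h]
      have := ih (z + (1,0)); have := ih (z + (-1,0)); have := ih (z + (0,1))
      have := ih (z + (0,-1))
      positivity

lemma hh_sum_le (A : Set (ℤ × ℤ)) (x : ℤ × ℤ) (n : ℕ) :
    ∀ z, ∑ i ∈ Finset.range n, hh A x i z ≤ 1 := by
  induction n with
  | zero => intro z; simp
  | succ n ih =>
    intro z
    rw [Finset.sum_range_succ']
    by_cases h : z ∈ A
    · rw [Finset.sum_eq_zero (fun i _ => hh_succ_mem _ _ _ _ h)]
      simp only [hh]; split_ifs <;> norm_num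
    · rw [hh_zero _ _ _ (fun h' => h (by rw [h'.1]; exact h'.2))]
      rw [Finset.sum_congr rfl (fun i _ => hh_succ _ _ _ _ h), ← Finset.sum_div,
        Finset.sum_add_distrib, Finset.sum_add_distrib, Finset.sum_add_distrib]
      linarith [ih (z + (1,0)), ih (z + (-1,0)), ih (z + (0,1)), ih (z + (0,-1))]

lemma hh_summable (A : Set (ℤ × ℤ)) (x z : ℤ × ℤ) : Summable (fun n => hh A x n z) :=
  summable_of_sum_range_le (fun n => hh_nonneg A x n z) (fun n => hh_sum_le A x n z)

lemma pos_zero (z : ℤ × ℤ) {n : ℕ} (σ : Fin n → ℤ × ℤ) : pos z σ 0 = z := by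
  simp [pos]

lemma pos_cons (z : ℤ × ℤ) {n : ℕ} (e : ℤ × ℤ) (σ : Fin n → ℤ × ℤ) (m : ℕ) :
    pos z (Fin.cons e σ : Fin (n+1) → ℤ × ℤ) (m+1) = pos (z + e) σ m := by
  simp only [pos, Finset.sum_filter]
  rw [Fin.sum_univ_succ]
  simp [add_assoc]

lemma stepProb_succ (n : ℕ) (E : (Fin (n+1) → ℤ × ℤ) → Prop) :
    stepProb (n+1) E = (∑ e ∈ dirs, stepProb n (fun σ => E (Fin.cons e σ))) / 4 := by
  have h1 : Nat.card {σ : Fin (n+1) → ↥dirs // E fun i => ((σ i : ℤ × ℤ))}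
      = ∑ e : ↥dirs, Nat.card {σ : Fin n → ↥dirs // E (Fin.cons (e : ℤ × ℤ) fun i => ((σ i : ℤ × ℤ)))} := by
    rw [← Nat.card_sigma]
    refine Nat.card_congr ?_
    refine (Equiv.subtypeEquiv (Fin.consEquiv (fun _ => ↥dirs)).symm
      (q := fun p : ↥dirs × (Fin n → ↥dirs) => E (Fin.cons (p.1 : ℤ × ℤ) fun i => ((p.2 i : ℤ × ℤ)))) ?_).trans ?_
    · intro σ
      have : (fun i => ((σ i : ℤ × ℤ))) = Fin.cons ((σ 0 : ↥dirs) : ℤ × ℤ) fun i => ((σ (Fin.succ i) : ℤ × ℤ)) := by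
        funext i
        refine Fin.cases ?_ (fun j => ?_) i <;> simp
      rw [this]
      rfl
    · exact { toFun := fun p => ⟨p.1.1, ⟨p.1.2, p.2⟩⟩
              invFun := fun p => ⟨(p.1, p.2.1), p.2.2⟩
              left_inv := fun p => rfl
              right_inv := fun p => rfl }
  unfold stepProb
  rw [h1, Nat.cast_sum, ← Finset.sum_div, div_div, pow_succ]
  congr 1

lemma sum_dirs (f : ℤ × ℤ → ℝ) :
    ∑ e ∈ dirs, f e = f (1,0) + f (-1,0) + f (0,1) + f (0,-1) := by
  rw [dirs, Finset.sum_insert (by decide), Finset.sum_insert (by decide),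
    Finset.sum_insert (by decide), Finset.sum_singleton]
  ring

lemma stepProb_eq_hh (A : Set (ℤ × ℤ)) (x : ℤ × ℤ) (n : ℕ) : ∀ z,
    stepProb n (fun σ => pos z σ n = x ∧ x ∈ A ∧ ∀ m < n, pos z σ m ∉ A) = hh A x n z := by
  induction n with
  | zero =>
    intro z
    simp only [pos_zero, stepProb]
    by_cases h : z = x ∧ x ∈ A
    · obtain ⟨rfl, h⟩ := h
      rw [hh_zero_self _ _ h]
      simp [h]
    · rw [hh_zero _ _ _ h]
      simp [h]
  | succ n ih =>
    intro z
    rw [stepProb_succ]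
    by_cases h : z ∈ A
    · rw [hh_succ_mem _ _ _ _ h]
      have : ∀ e, stepProb n (fun σ => pos z (Fin.cons e σ : Fin (n+1) → ℤ × ℤ) (n+1) = x ∧ x ∈ A ∧
          ∀ m < n+1, pos z (Fin.cons e σ : Fin (n+1) → ℤ × ℤ) m ∉ A) = 0 := by
        intro e
        have : ∀ σ : Fin n → ℤ × ℤ, ¬ (pos z (Fin.cons e σ : Fin (n+1) → ℤ × ℤ) (n+1) = x ∧ x ∈ A ∧
          ∀ m < n+1, pos z (Fin.cons e σ : Fin (n+1) → ℤ × ℤ) m ∉ A) := by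
          intro σ h'
          exact h'.2.2 0 (Nat.succ_pos n) (by rw [pos_zero]; exact h)
        simp only [stepProb, this]
        simp
      rw [Finset.sum_eq_zero (fun e _ => this e), zero_div]
    · rw [hh_succ _ _ _ _ h, ← ih, ← ih, ← ih, ← ih, sum_dirs]
      have key : ∀ e, (fun σ : Fin n → ℤ × ℤ => pos z (Fin.cons e σ : Fin (n+1) → ℤ × ℤ) (n+1) = x ∧ x ∈ A ∧
          ∀ m < n+1, pos z (Fin.cons e σ : Fin (n+1) → ℤ × ℤ) m ∉ A)
          = fun σ => pos (z + e) σ n = x ∧ x ∈ A ∧ ∀ m < n, pos (z + e) σ m ∉ A := by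
        intro e; funext σ
        rw [pos_cons]
        refine propext (and_congr_right fun _ => and_congr_right fun _ => ⟨?_, ?_⟩)
        · intro H m hm
          have := H (m+1) (by omega)
          rwa [pos_cons] at this
        · intro H m hm
          cases m with
          | zero => rw [pos_zero]; exact h
          | succ m => rw [pos_cons]; exact H m (by omega)
      simp only [key]

lemma hitProb_eq (A : Set (ℤ × ℤ)) (x z : ℤ × ℤ) : hitProb z A x = ∑' n, hh A x n z := by
  unfold hitProb
  exact tsum_congr fun n => stepProb_eq_hh A x n z

lemma summable_mul {u : ℤ × ℤ → ℝ} (hfin : (Function.support u).Finite) (g : ℤ × ℤ → ℝ) :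
    Summable (fun z => u z * g z) :=
  summable_of_finite_support (hfin.subset (fun z hz => by
    rw [Function.mem_support] at hz ⊢; intro h; exact hz (by rw [h, zero_mul])))

/-- Summation by parts for one direction. -/
lemma tsum_shift (u g : ℤ × ℤ → ℝ) (e : ℤ × ℤ) :
    ∑' z, u z * g (z + e) = ∑' z, u (z - e) * g z := by
  rw [← (Equiv.addRight e).tsum_eq (fun z => u (z - e) * g z)]
  simp

lemma shift_finite {u : ℤ × ℤ → ℝ} (hfin : (Function.support u).Finite) (e : ℤ × ℤ) :
    (Function.support fun z => u (z - e)).Finite := by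
  have : (Function.support fun z => u (z - e)) = (fun z => z - e) ⁻¹' Function.support u := rfl
  rw [this]
  exact hfin.preimage (fun a _ b _ h => sub_left_injective h)

lemma core_step (A : Set (ℤ × ℤ)) (x : ℤ × ℤ) (u : ℤ × ℤ → ℝ)
    (hfin : (Function.support u).Finite) (huA : ∀ z ∈ A, u z = 0)
    (F : Finset (ℤ × ℤ)) (C : ℝ)
    (hF : ∀ z ∉ A, u z ≤ (u (z + (1,0)) + u (z + (-1,0)) + u (z + (0,1)) + u (z + (0,-1))) / 4
      + if z ∈ F then C else 0) (n : ℕ) :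
    ∑' z, u z * hh A x (n+1) z ≤ ∑' z, u z * hh A x (n+2) z + C * ∑ z ∈ F, hh A x (n+1) z := by
  set g := hh A x (n+1) with hg
  have h1 : ∀ z, u z * hh A x (n+2) z = (u z * g (z + (1,0)) + u z * g (z + (-1,0))
      + u z * g (z + (0,1)) + u z * g (z + (0,-1))) * (1/4) := by
    intro z
    by_cases h : z ∈ A
    · rw [huA z h]; ring
    · rw [hh_succ _ _ _ _ h]; ring
  have S := fun e => summable_mul hfin (fun z => g (z + e))
  have S' := fun e => summable_mul (shift_finite hfin e) g
  have h2 : ∑' z, u z * hh A x (n+2) z = ∑' z, (u (z - (1,0)) * g z + u (z - (-1,0)) * g z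
      + u (z - (0,1)) * g z + u (z - (0,-1)) * g z) * (1/4) := by
    rw [tsum_congr h1, tsum_mul_right, tsum_mul_right,
      (((S _).add (S _)).add (S _)).tsum_add (S _), ((S _).add (S _)).tsum_add (S _),
      (S _).tsum_add (S _),
      (((S' _).add (S' _)).add (S' _)).tsum_add (S' _), ((S' _).add (S' _)).tsum_add (S' _),
      (S' _).tsum_add (S' _), tsum_shift, tsum_shift, tsum_shift, tsum_shift]
  have h3 : C * ∑ z ∈ F, g z = ∑' z, (if z ∈ F then C else 0) * g z := by
    rw [tsum_eq_sum (s := F) (fun z hz => by rw [if_neg hz, zero_mul]), Finset.mul_sum]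
    exact Finset.sum_congr rfl fun z hz => by rw [if_pos hz]
  have S3 : Summable (fun z => (if z ∈ F then C else 0) * g z) :=
    summable_mul (u := fun z => if z ∈ F then C else 0) (F.finite_toSet.subset (fun z hz => by
      by_contra h; exact hz (if_neg h))) g
  have S4 := ((((S' (1,0)).add (S' (-1,0))).add (S' (0,1))).add (S' (0,-1))).mul_right (1/4 : ℝ)
  rw [h2, h3, ← S4.tsum_add S3]
  refine (summable_mul hfin g).tsum_le_tsum (fun z => ?_) (S4.add S3)
  by_cases h : z ∈ A
  · rw [hg, hh_succ_mem _ _ _ _ h]; simp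
  · have hz := hF z h
    have h0 : 0 ≤ g z := hh_nonneg A x (n+1) z
    have e1 : z - ((1:ℤ),(0:ℤ)) = z + (-1,0) := by ext <;> simp [sub_eq_add_neg]
    have e2 : z - ((-1:ℤ),(0:ℤ)) = z + (1,0) := by ext <;> simp
    have e3 : z - ((0:ℤ),(1:ℤ)) = z + (0,-1) := by ext <;> simp [sub_eq_add_neg]
    have e4 : z - ((0:ℤ),(-1:ℤ)) = z + (0,1) := by ext <;> simp
    rw [e1, e2, e3, e4]
    have := mul_le_mul_of_nonneg_right hz h0
    linarith

lemma core (A : Set (ℤ × ℤ)) (x : ℤ × ℤ) (u : ℤ × ℤ → ℝ)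
    (hfin : (Function.support u).Finite) (huA : ∀ z ∈ A, u z = 0)
    (F : Finset (ℤ × ℤ)) (C : ℝ) (hC : 0 ≤ C)
    (hF : ∀ z ∉ A, u z ≤ (u (z + (1,0)) + u (z + (-1,0)) + u (z + (0,1)) + u (z + (0,-1))) / 4
      + if z ∈ F then C else 0) (n : ℕ) :
    ∑' z, u z * hh A x (n+1) z ≤ C * ∑ z ∈ F, ∑' k, hh A x k z := by
  have a : ∀ k, ∑' z, u z * hh A x (n+1) z ≤ ∑' z, u z * hh A x (n+k+1) z
      + C * ∑ z ∈ F, ∑ i ∈ Finset.range k, hh A x (n+i+1) z := by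
    intro k
    induction k with
    | zero => simp
    | succ k ih =>
      have := core_step A x u hfin huA F C hF (n+k)
      simp only [Finset.sum_range_succ, Finset.sum_add_distrib]
      rw [mul_add]
      have e : n + (k+1) + 1 = n + k + 2 := by ring
      rw [e]
      linarith
  have b : ∀ k, ∑' z, u z * hh A x (n+1) z ≤ ∑' z, u z * hh A x (n+k+1) z
      + C * ∑ z ∈ F, ∑' k, hh A x k z := by
    intro k
    refine (a k).trans ?_
    gcongr with z hz
    have : ∑ i ∈ Finset.range k, hh A x (n+i+1) z
        = ∑ i ∈ (Finset.range k).map ⟨fun i => n+i+1, fun a b h => by simpa using h⟩, hh A x i z := by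
      rw [Finset.sum_map]; rfl
    rw [this]
    exact (hh_summable A x z).sum_le_tsum _ (fun i _ => hh_nonneg A x i z)
  have lim : Tendsto (fun k => ∑' z, u z * hh A x (n+k+1) z) atTop (nhds 0) := by
    have : ∀ k, ∑' z, u z * hh A x (n+k+1) z = ∑ z ∈ hfin.toFinset, u z * hh A x (n+k+1) z := by
      intro k
      refine tsum_eq_sum (fun z hz => ?_)
      have : u z = 0 := by simpa using hz
      rw [this, zero_mul]
    simp only [this]
    have h0 : (0:ℝ) = ∑ z ∈ hfin.toFinset, u z * 0 := by simp
    rw [h0]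
    refine tendsto_finset_sum _ (fun z _ => Tendsto.const_mul _ ?_)
    have := (hh_summable A x z).tendsto_atTop_zero
    have t : Tendsto (fun k => n + k + 1) atTop atTop :=
      tendsto_atTop_mono (fun k => by simp only [id]; omega) tendsto_id
    exact this.comp t
  have := ge_of_tendsto' (lim.add_const (C * ∑ z ∈ F, ∑' k, hh A x k z)) b
  linarith

/-- The bounded superharmonic function at scale `R`. -/
noncomputable def psi (R : ℝ) (x y : ℤ) : ℝ :=
  if (y : ℝ) < R then min 1 (((x:ℝ)^2 - (y:ℝ)^2 + 2 * R * y) / R^2) else 1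

lemma psi_le_one (R : ℝ) (x y : ℤ) : psi R x y ≤ 1 := by
  unfold psi; split_ifs
  · exact min_le_left _ _
  · exact le_rfl

lemma psi_nonneg (R : ℝ) (x y : ℤ) (hR : 0 < R) (hy : 0 ≤ y) : 0 ≤ psi R x y := by
  have hy' : (0:ℝ) ≤ y := by exact_mod_cast hy
  unfold psi; split_ifs with h
  · refine le_min zero_le_one (div_nonneg ?_ (sq_nonneg R))
    nlinarith [sq_nonneg (x:ℝ)]
  · exact zero_le_one

lemma psi_eq_one (R : ℝ) (x y : ℤ) (hR : 0 < R) (hy : 0 ≤ y) (hx : R ≤ |(x:ℝ)|) :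
    psi R x y = 1 := by
  have hy' : (0:ℝ) ≤ y := by exact_mod_cast hy
  unfold psi; split_ifs with h
  · refine min_eq_left ?_
    rw [le_div_iff₀ (by positivity)]
    have := sq_abs (x:ℝ)
    nlinarith [abs_nonneg (x:ℝ)]
  · rfl

lemma psi_zero_le (R : ℝ) (y : ℤ) (hR : 0 < R) (hy : 0 ≤ y) : psi R 0 y ≤ 2 / R * y := by
  have hy' : (0:ℝ) ≤ y := by exact_mod_cast hy
  unfold psi; split_ifs with h
  · refine (min_le_right _ _).trans ?_
    rw [div_mul_eq_mul_div, div_le_div_iff₀ (by positivity) hR]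
    push_cast
    nlinarith [mul_nonneg hR.le (sq_nonneg (y:ℝ))]
  · rw [div_mul_eq_mul_div, le_div_iff₀ hR]; linarith

lemma psi_le_quad (R : ℝ) (x y : ℤ) (hR : 0 < R) (h1 : (y:ℝ) ≤ R) :
    psi R x y ≤ ((x:ℝ)^2 - (y:ℝ)^2 + 2 * R * y) / R^2 := by
  unfold psi; split_ifs with h
  · exact min_le_right _ _
  · have : (y:ℝ) = R := le_antisymm h1 (not_lt.mp h)
    rw [le_div_iff₀ (by positivity), this]
    nlinarith [sq_nonneg (x:ℝ)]

lemma psi_super (R : ℕ) (x y : ℤ) (hR : 0 < R) :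
    psi R (x+1) y + psi R (x-1) y + psi R x (y+1) + psi R x (y-1) ≤ 4 * psi R x y := by
  have hR' : (0:ℝ) < R := by exact_mod_cast hR
  have o := psi_le_one R
  by_cases h : (y:ℝ) < R
  · have e : psi R x y = min 1 (((x:ℝ)^2 - (y:ℝ)^2 + 2 * R * y) / (R:ℝ)^2) := if_pos h
    have h' : (y:ℝ) + 1 ≤ R := by exact_mod_cast h
    rw [e]
    rcases min_choice (1:ℝ) (((x:ℝ)^2 - (y:ℝ)^2 + 2 * R * y) / (R:ℝ)^2) with m | m <;> rw [m]
    · linarith [o (x+1) y, o (x-1) y, o x (y+1), o x (y-1)]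
    · have a1 := psi_le_quad R (x+1) y hR' (by linarith)
      have a2 := psi_le_quad R (x-1) y hR' (by linarith)
      have a3 := psi_le_quad R x (y+1) hR' (by push_cast; linarith)
      have a4 := psi_le_quad R x (y-1) hR' (by push_cast; linarith)
      refine (add_le_add (add_le_add (add_le_add a1 a2) a3) a4).trans (le_of_eq ?_)
      push_cast
      field_simp
      ring
  · have e : psi R x y = 1 := if_neg h
    rw [e]
    linarith [o (x+1) y, o (x-1) y, o x (y+1), o x (y-1)]

/-- Existence of a superharmonic majorant with slow growth along the vertical axis. -/
lemma exists_w (β : ℝ) (hβ0 : 0 < β) (hβ : β < 1) (h₀ : ℤ) (hh₀ : 1 ≤ h₀) :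
    ∃ M : ℝ, 1 ≤ M ∧ ∀ N : ℕ, ∃ w : ℤ → ℤ → ℝ, ∃ X : ℝ,
      (∀ x y, 0 ≤ y → (h₀ : ℝ) ≤ w x y) ∧
      (∀ x y, w (x+1) y + w (x-1) y + w x (y+1) + w x (y-1) ≤ 4 * w x y) ∧
      (∀ x y : ℤ, 0 ≤ y → min (|(x:ℝ)| ^ β) N ≤ w x y) ∧
      (∀ x y : ℤ, 0 ≤ y → X ≤ |(x:ℝ)| → N ≤ w x y) ∧
      (∀ y, 0 ≤ y → w 0 y ≤ M + y / 2) := by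
  set c : ℕ → ℝ := fun k => ((2:ℝ)^(k+1)) ^ β with hc
  have c0 : ∀ k, 0 ≤ c k := fun k => by positivity
  set d : ℕ → ℝ := fun k => c k * (2 / 2^k) with hd
  have d0 : ∀ k, 0 ≤ d k := fun k => by positivity
  have dsum : Summable d := by
    have : d = fun k => (2 * (2:ℝ)^β) * ((2:ℝ)^β / 2)^k := by
      funext k
      simp only [hd, hc]
      rw [pow_succ, Real.mul_rpow (by positivity) (by positivity), div_pow,
        ← Real.rpow_natCast, ← Real.rpow_mul (by norm_num), mul_comm (k:ℝ) β,
        Real.rpow_mul (by norm_num), Real.rpow_natCast]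
      rw [Real.rpow_natCast]
      ring
    rw [this]
    refine Summable.mul_left _ (summable_geometric_of_lt_one (by positivity) ?_)
    rw [div_lt_one (by norm_num)]
    calc (2:ℝ)^β < 2^(1:ℝ) := Real.rpow_lt_rpow_of_exponent_lt (by norm_num) hβ
      _ = 2 := by simp
  obtain ⟨m, hm⟩ := ((tendsto_sum_nat_add d).eventually (gt_mem_nhds (show (0:ℝ) < 1/2 by norm_num))).exists
  set M : ℝ := max (h₀:ℝ) (((2:ℝ)^m)^β) with hM
  have hh₀' : (1:ℝ) ≤ h₀ := by exact_mod_cast hh₀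
  refine ⟨M, le_max_of_le_left hh₀', fun N => ?_⟩
  have hM0 : (h₀:ℝ) ≤ M := le_max_left _ _
  have ctop : Tendsto c atTop atTop := by
    refine (tendsto_rpow_atTop hβ0).comp ?_
    exact (tendsto_pow_atTop_atTop_of_one_lt (by norm_num)).comp (tendsto_add_atTop_nat 1)
  obtain ⟨J, hJ⟩ := (((ctop.comp (tendsto_add_atTop_nat m)).eventually (eventually_ge_atTop (N:ℝ)))).exists
  simp only [Function.comp] at hJ
  set w : ℤ → ℤ → ℝ := fun x y => M + ∑ j ∈ Finset.range (J+1), c (j+m) * psi ((2^(j+m) : ℕ) : ℝ) x y with hw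
  have R0 : ∀ j, (0:ℝ) < ((2^j : ℕ) : ℝ) := fun j => by positivity
  have p0 : ∀ x y j, 0 ≤ y → 0 ≤ c (j+m) * psi ((2^(j+m) : ℕ) : ℝ) x y :=
    fun x y j hy => mul_nonneg (c0 _) (psi_nonneg _ _ _ (R0 _) hy)
  have wM : ∀ x y, 0 ≤ y → M ≤ w x y := fun x y hy =>
    le_add_of_nonneg_right (Finset.sum_nonneg fun j _ => p0 x y j hy)
  have wc : ∀ (x y : ℤ) (j : ℕ), 0 ≤ y → j ≤ J → (2:ℝ)^(j+m) ≤ |(x:ℝ)| → c (j+m) ≤ w x y := by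
    intro x y j hy hj hx
    have h1 : c (j+m) * psi ((2^(j+m) : ℕ) : ℝ) x y ≤
        ∑ j ∈ Finset.range (J+1), c (j+m) * psi ((2^(j+m) : ℕ) : ℝ) x y :=
      Finset.single_le_sum (f := fun j => c (j+m) * psi ((2^(j+m) : ℕ) : ℝ) x y)
        (fun i _ => p0 x y i hy) (Finset.mem_range.2 (by omega))
    rw [psi_eq_one _ _ _ (R0 _) hy (by push_cast; exact hx), mul_one] at h1
    simp only [hw]
    linarith
  have wX : ∀ x y : ℤ, 0 ≤ y → (2:ℝ)^(J+m) ≤ |(x:ℝ)| → (N:ℝ) ≤ w x y :=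
    fun x y hy hx => hJ.trans (wc x y J hy le_rfl hx)
  refine ⟨w, 2^(J+m), fun x y hy => hM0.trans (wM x y hy), ?_, ?_, wX, ?_⟩
  · intro x y
    have := Finset.sum_le_sum (s := Finset.range (J+1)) (fun j _ =>
      mul_le_mul_of_nonneg_left (psi_super (2^(j+m)) x y (by positivity)) (c0 (j+m)))
    simp only [mul_add, Finset.sum_add_distrib] at this
    have e : ∑ j ∈ Finset.range (J+1), c (j+m) * (4 * psi ((2^(j+m) : ℕ) : ℝ) x y)
        = 4 * ∑ j ∈ Finset.range (J+1), c (j+m) * psi ((2^(j+m) : ℕ) : ℝ) x y := by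
      rw [Finset.mul_sum]; exact Finset.sum_congr rfl fun j _ => by ring
    rw [e] at this
    simp only [hw]
    linarith
  · intro x y hy
    by_cases h1 : |(x:ℝ)| < 2^m
    · refine (min_le_left _ _).trans (le_trans ?_ (wM x y hy))
      exact (Real.rpow_le_rpow (abs_nonneg _) h1.le hβ0.le).trans (le_max_right _ _)
    · push Not at h1
      have h2 : (1:ℝ) ≤ |(x:ℝ)| := (one_le_pow₀ (by norm_num)).trans h1
      obtain ⟨k, hk1, hk2⟩ := exists_nat_pow_near h2 (show (1:ℝ) < 2 by norm_num)
      have hk : m ≤ k := by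
        by_contra h
        have : (2:ℝ)^(k+1) ≤ 2^m := pow_le_pow_right₀ (by norm_num) (by omega)
        linarith
      obtain ⟨j, rfl⟩ := Nat.exists_eq_add_of_le' hk
      by_cases hj : j ≤ J
      · refine (min_le_left _ _).trans (le_trans ?_ (wc x y j hy hj hk1))
        exact Real.rpow_le_rpow (abs_nonneg _) hk2.le hβ0.le
      · refine (min_le_right _ _).trans (wX x y hy (le_trans ?_ hk1))
        exact pow_le_pow_right₀ (by norm_num) (by omega)
  · intro y hy
    have hy' : (0:ℝ) ≤ y := by exact_mod_cast hy
    have h1 : ∑ j ∈ Finset.range (J+1), c (j+m) * psi ((2^(j+m) : ℕ) : ℝ) 0 y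
        ≤ ∑ j ∈ Finset.range (J+1), d (j+m) * y := by
      refine Finset.sum_le_sum fun j _ => ?_
      have := mul_le_mul_of_nonneg_left (psi_zero_le _ y (R0 (j+m)) hy) (c0 (j+m))
      refine this.trans (le_of_eq ?_)
      simp only [hd]; push_cast; ring
    rw [← Finset.sum_mul] at h1
    have h2 : ∑ j ∈ Finset.range (J+1), d (j+m) ≤ 1/2 :=
      (((summable_nat_add_iff m).2 dsum).sum_le_tsum _ (fun j _ => d0 _)).trans hm.le
    have := mul_le_mul_of_nonneg_right h2 hy'
    simp only [hw]
    linarith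

lemma hh_up (A : Set (ℤ × ℤ)) (h₀ : ℤ) (h : ((0:ℤ), h₀) ∈ A) (hA : ∀ y, h₀ < y → ((0:ℤ), y) ∉ A) (n : ℕ) :
    (1/4 : ℝ)^n ≤ hh A (0, h₀) n (0, h₀ + n) := by
  induction n with
  | zero => simp [hh_zero_self A _ h]
  | succ n ih =>
    rw [hh_succ _ _ _ _ (hA _ (by push_cast; omega))]
    have e : (((0:ℤ), h₀ + ((n+1 : ℕ):ℤ)) + (0,-1) : ℤ × ℤ) = (0, h₀ + n) := by
      ext <;> simp
      ring
    rw [e, pow_succ]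
    have := hh_nonneg A (0, h₀) n
    linarith [this (((0:ℤ), h₀ + ((n+1 : ℕ):ℤ)) + (1,0)), this (((0:ℤ), h₀ + ((n+1 : ℕ):ℤ)) + (-1,0)),
      this (((0:ℤ), h₀ + ((n+1 : ℕ):ℤ)) + (0,1))]


/-- **The tip of the sub-polynomial region has positive stationary harmonic measure.**
Let `α > 1` with `α ∉ ℚ ∪ ℚ₂`, let `h₀ ≥ 1` be an integer, `Ŵ = D₀ ∪ U_{h₀}` and
`ξ₀ = (0, h₀)`.  Then there is a constant `c > 0`, independent of `N`, such that
`H_{Ŵ,N}(ξ₀) ≥ c` for all sufficiently large `N`. -/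
theorem harm_tip_ge (α : ℝ) (hα : 1 < α) (hirr : Irrational α) (hQ2 : α ∉ Q2)
    (h₀ : ℤ) (hh₀ : 1 ≤ h₀) :
    ∃ c : ℝ, 0 < c ∧ ∀ᶠ N : ℕ in atTop,
      c ≤ harm (boxD₀ α h₀ ∪ regionU α h₀) N ((0 : ℤ), h₀) := by
  have hα0 : 0 < α := by linarith
  have hβ0 : 0 < 1 / α := by positivity
  have hβ1 : 1 / α < 1 := by rw [div_lt_one hα0]; exact hα
  obtain ⟨M, hM1, hW⟩ := exists_w (1/α) hβ0 hβ1 h₀ hh₀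
  set B := boxD₀ α h₀ ∪ regionU α h₀ with hB
  set A := B ∪ lineH 0 with hA
  have hh₀' : (1:ℝ) ≤ h₀ := by exact_mod_cast hh₀
  have hceil : (1:ℤ) ≤ ⌈(h₀ : ℝ) ^ α⌉ := by
    rw [Int.one_le_ceil_iff]; positivity
  -- facts about A
  have hxA : ((0:ℤ), h₀) ∈ A := by
    refine Or.inl (Or.inl ?_)
    simp only [boxD₀, Set.mem_ofPred_eq]
    refine ⟨by simp; omega, by omega, le_rfl⟩
  have hupA : ∀ y, h₀ < y → ((0:ℤ), y) ∉ A := by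
    rintro y hy ((h | h) | h)
    · simp only [boxD₀, Set.mem_ofPred_eq] at h; omega
    · simp only [regionU, Set.mem_ofPred_eq, abs_zero] at h
      omega
    · simp only [lineH, Set.mem_ofPred_eq] at h; omega
  set m : ℕ := ⌈2 * M + 2⌉₊ with hm
  have hm' : 2 * M + 2 ≤ (m:ℝ) := Nat.le_ceil _
  have hm0 : m ≠ 0 := by
    intro h; rw [h] at hm'; push_cast at hm'; linarith
  obtain ⟨m', rfl'⟩ := Nat.exists_eq_succ_of_ne_zero hm0
  refine ⟨2 * (1/4)^m, by positivity, ?_⟩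
  filter_upwards [eventually_ge_atTop (h₀.toNat + m)] with N hN
  have hN0 : (h₀ + m : ℤ) ≤ N := by omega
  have hN0' : (h₀ + m : ℝ) ≤ N := by exact_mod_cast hN0
  obtain ⟨w, X, w1, w2, w3, w4, w5⟩ := hW N
  set v : ℤ × ℤ → ℝ := fun z => min (z.2:ℝ) (2 * N - z.2) - w z.1 z.2 with hv
  set u : ℤ × ℤ → ℝ := fun z => if 0 < z.2 then max (v z) 0 else 0 with hu
  have u0 : ∀ z, 0 ≤ u z := by
    intro z; simp only [hu]; split_ifs
    · exact le_max_right _ _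
    · exact le_rfl
  have vneg : ∀ z : ℤ × ℤ, 0 ≤ z.2 → (min (z.2:ℝ) (2 * N - z.2) ≤ w z.1 z.2) → u z = 0 := by
    intro z hz h
    simp only [hu]; split_ifs
    · exact max_eq_right (by simp only [hv]; linarith)
    · rfl
  have minN : ∀ y : ℝ, min y (2 * N - y) ≤ N := by
    intro y
    rcases le_total y N with h | h
    · exact (min_le_left _ _).trans h
    · exact (min_le_right _ _).trans (by linarith)
  have uv : ∀ z : ℤ × ℤ, 0 ≤ z.2 → v z ≤ u z := by
    intro z hz; simp only [hu]; split_ifs with h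
    · exact le_max_left _ _
    · have h0 : z.2 = 0 := by omega
      have := w1 z.1 z.2 hz
      have h2 := min_le_left (z.2:ℝ) (2 * N - z.2)
      rw [h0] at this h2
      simp only [hv]
      rw [h0]
      push_cast at *
      linarith
  have huA : ∀ z ∈ A, u z = 0 := by
    rintro z ((h | h) | h)
    · obtain ⟨h1, h2, h3⟩ := h
      refine vneg z h2 ((min_le_left _ _).trans (le_trans ?_ (w1 _ _ h2)))
      exact_mod_cast h3
    · obtain ⟨h1, h2, h3⟩ := h
      have h1' : 0 ≤ z.2 := h1
      refine vneg z h1' (le_trans ?_ (w3 _ _ h1'))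
      exact le_min ((min_le_left _ _).trans h3) (minN _)
    · have h' : z.2 = 0 := h
      simp only [hu]; rw [if_neg (by omega)]
  have hfin : (Function.support u).Finite := by
    refine ((Set.finite_Icc (-⌈|X|⌉) ⌈|X|⌉).prod (Set.finite_Icc (0:ℤ) (2*N))).subset ?_
    intro z hz
    have hz' : u z ≠ 0 := hz
    have hy : 0 < z.2 := by
      by_contra h; exact hz' (by simp only [hu]; rw [if_neg h])
    have hy2 : z.2 ≤ 2 * N := by
      by_contra h
      refine hz' (vneg z hy.le ((min_le_right _ _).trans ?_))
      have := w1 z.1 z.2 hy.le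
      have h' : (2 * N : ℝ) ≤ z.2 := by push Not at h; exact_mod_cast h.le
      linarith
    have hx : |(z.1:ℝ)| < X := by
      by_contra h; push Not at h
      exact hz' (vneg z hy.le ((minN _).trans (w4 _ _ hy.le h)))
    have hx2 : |z.1| ≤ ⌈|X|⌉ := by
      have h1 : (|z.1| : ℝ) ≤ ⌈|X|⌉ := hx.le.trans ((le_abs_self X).trans (Int.le_ceil _))
      exact_mod_cast h1
    rw [abs_le] at hx2
    exact ⟨hx2, hy.le, hy2⟩
  have hFfin : (lineH (N:ℤ) \ B).Finite := by
    set Y : ℤ := max ⌈(h₀ : ℝ) ^ α⌉ ⌈(N:ℝ)^α⌉ with hY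
    refine ((Set.finite_Icc (-Y) Y).prod (Set.finite_singleton (N:ℤ))).subset ?_
    rintro z ⟨hz1, hz2⟩
    have hz1' : z.2 = N := hz1
    refine ⟨?_, hz1'⟩
    rw [Set.mem_Icc, ← abs_le]
    by_contra h
    push Not at h
    refine hz2 (Or.inr ⟨?_, ?_, ?_⟩)
    · change 0 ≤ z.2; omega
    · exact (le_max_left _ _).trans h.le
    · have h1 : (N:ℝ)^α ≤ |(z.1:ℝ)| := by
        have a1 : (⌈(N:ℝ)^α⌉ : ℤ) ≤ |z.1| := (le_max_right _ _).trans h.le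
        exact (Int.le_ceil _).trans (by exact_mod_cast a1)
      rw [hz1']
      have h2 := Real.rpow_le_rpow (by positivity) h1 hβ0.le
      rw [← Real.rpow_mul (by positivity), mul_one_div_cancel hα0.ne', Real.rpow_one] at h2
      exact_mod_cast h2
  have hF : ∀ z ∉ A, u z ≤ (u (z + (1,0)) + u (z + (-1,0)) + u (z + (0,1)) + u (z + (0,-1))) / 4
      + if z ∈ hFfin.toFinset then (1/2:ℝ) else 0 := by
    intro z hz
    have q0 : (0:ℝ) ≤ if z ∈ hFfin.toFinset then (1/2:ℝ) else 0 := by split_ifs <;> norm_num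
    by_cases hp : u z = 0
    · rw [hp]
      have := u0 (z + (1,0)); have := u0 (z + (-1,0)); have := u0 (z + (0,1))
      have := u0 (z + (0,-1))
      positivity
    · have hy : 0 < z.2 := by
        by_contra h; exact hp (by simp only [hu]; rw [if_neg h])
      have huz : u z = v z := by
        simp only [hu] at hp ⊢; rw [if_pos hy] at hp ⊢
        rcases max_choice (v z) 0 with h | h
        · exact h
        · exact absurd h hp
      obtain ⟨x, y⟩ := z
      simp only at hy
      have b1 := uv ((x,y) + (1,0)) (by simp; omega)
      have b2 := uv ((x,y) + (-1,0)) (by simp; omega)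
      have b3 := uv ((x,y) + (0,1)) (by simp; omega)
      have b4 := uv ((x,y) + (0,-1)) (by simp; omega)
      rw [huz]
      have ws := w2 x y
      simp only [hv, Prod.mk_add_mk, add_zero, ← sub_eq_add_neg] at b1 b2 b3 b4 ⊢
      push_cast at b1 b2 b3 b4
      rcases lt_trichotomy y (N:ℤ) with h | h | h
      · have h' : (y:ℝ) + 1 ≤ N := by exact_mod_cast h
        rw [min_eq_left (by linarith)] at b1 b2 b3 b4 ⊢
        linarith
      · have h' : (y:ℝ) = N := by exact_mod_cast h
        have hmem : (x,y) ∈ hFfin.toFinset := by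
          rw [Set.Finite.mem_toFinset]
          exact ⟨h, fun hb => hz (Or.inl hb)⟩
        rw [if_pos hmem]
        rw [min_eq_left (by linarith)] at b1 b2 b4 ⊢
        rw [min_eq_right (by linarith)] at b3
        linarith
      · have h' : (N:ℝ) + 1 ≤ y := by exact_mod_cast h
        rw [min_eq_right (by linarith)] at b1 b2 b3 b4 ⊢
        linarith
  have main := core A (0, h₀) u hfin huA hFfin.toFinset (1/2) (by norm_num) hF m'
  have harm_eq : harm B N (0, h₀) = ∑ z ∈ hFfin.toFinset, ∑' k, hh A (0, h₀) k z := by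
    unfold harm
    rw [← hA]
    simp only [hitProb_eq]
    rw [← Finset.tsum_subtype' hFfin.toFinset (fun z => ∑' k, hh A (0, h₀) k z), hFfin.coe_toFinset]
  rw [harm_eq]
  have e : m' + 1 = m := rfl'.symm
  rw [e] at main
  have lower : (1/4:ℝ)^m ≤ ∑' z, u z * hh A (0, h₀) m z := by
    have l1 := (summable_mul hfin (hh A (0, h₀) m)).le_tsum (0, h₀ + (m:ℤ))
      (fun z _ => mul_nonneg (u0 z) (hh_nonneg A _ m z))
    have l2 := hh_up A h₀ hxA hupA m
    have l3 : 1 ≤ u (0, h₀ + (m:ℤ)) := by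
      refine le_trans ?_ (uv (0, h₀ + (m:ℤ)) (by simp only; omega))
      have := w5 (h₀ + m) (by omega)
      simp only [hv]
      push_cast at this ⊢
      rw [min_eq_left (by linarith)]
      linarith
    have := mul_le_mul_of_nonneg_right l3 (hh_nonneg A (0,h₀) m (0, h₀ + (m:ℤ)))
    linarith
  linarith

end SHM
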